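/- (Marcinkiewicz–Zygmund inequality for multilinear operators, Carando–Mazzitelli–Ombrosi) Let (X_i,μ_i) for i=1,…,m and (Y,ν) be σ-finite measure spaces. Let either 0<p,q_1,…,q_m<r<2, or r=2 and 0<p,q_1,…,q_m<∞. Let S be an m-linear operator (linear in each variable) from L^{q_1}(μ_1)×⋯×L^{q_m}(μ_m) into measurable functions on Y which is bounded into L^{p,∞}(ν), i.e. ‖S(f_1,…,f_m)‖_{L^{p,∞}(ν)} ≤ ‖S‖_{weak} ∏_{i=1}^m ‖f_i‖_{L^{q_i}(μ_i)} for all f_i ∈ L^{q_i}(μ_i). Then there exists a constant C>0, depending only on p, q_1,…,q_m, r, m, such that for all countable families {f^i_{k_i}}_{k_i} ⊂ L^{q_i}(μ_i), i=1,…,m: ‖(Σ_{k_1,…,k_m} |S(f^1_{k_1},…,f^m_{k_m})|^r)^{1/r}‖_{L^{p,∞}(ν)} ≤ C ‖S‖_{weak} ∏_{i=1}^m ‖(Σ_{k_i} |f^i_{k_i}|^r)^{1/r}‖_{L^{q_i}(μ_i)}. -/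

import Mathlib

open MeasureTheory ENNReal Set

noncomputable section

/-- The weak `L^{p,∞}(ν)` quasinorm of an `ℝ≥0∞`-valued function. -/
def wnormAbs {Y : Type*} [MeasurableSpace Y] (ν : Measure Y) (g : Y → ℝ≥0∞) (p : ℝ) :
    ℝ≥0∞ :=
  ⨆ (t : ℝ) (_ : 0 < t), ENNReal.ofReal t * (ν {y | ENNReal.ofReal t < g y}) ^ (1 / p)

/-- The `L^q(μ)` quasinorm, `0 < q < ∞`. -/
def eLq {X : Type*} [MeasurableSpace X] (μ : Measure X) (f : X → ℝ) (q : ℝ) : ℝ≥0∞ :=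
  (∫⁻ x, ENNReal.ofReal (|f x| ^ q) ∂μ) ^ (1 / q)

/-- Membership in `L^q(μ)`, `0 < q < ∞`. -/
def MemLq {X : Type*} [MeasurableSpace X] (μ : Measure X) (f : X → ℝ) (q : ℝ) : Prop :=
  Measurable f ∧ eLq μ f q < ⊤

/-!
The variables are linearised one at a time. Suppose that `ξ` behaves like a vector of independent
`r`-stable variables. For a linear `T` we have `T (∑ fₖ ξₖ) = ∑ ξₖ T fₖ`, which at almost every
point is, with probability bounded below, at least of the order of `(∑ |T fₖ|^r)^(1/r)`; by
Markov's inequality the `L^q` norm of `∑ fₖ ξₖ` is at most of the order of that of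
`(∑ |fₖ|^r)^(1/r)`, with probability close to one. Integrating over the level sets transfers the
weak-type bound from `T` to the `ℓ^r`-valued extension. All this works for finite families of
operators `T` in the `ℓ^r` norm, so it can be repeated in the next variable.

For `r = 2` random signs serve as `ξ`, by the inequalities of Khintchine and Paley–Zygmund. For
`r < 2` genuine stable variables are not needed, only their tails: we take random signs times
`2 ^ (N / r)` with `N` geometric. As `ξ` is then discrete, no measurability of the random function
`T (∑ fₖ ξₖ)` is ever at stake.
-/

section WeakNorm

variable {Y : Type*} [MeasurableSpace Y] {ν : Measure Y} {p : ℝ}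

lemma wnormAbs_le_iff {g : Y → ℝ≥0∞} (hp : 0 < p) {R : ℝ≥0∞} :
    wnormAbs ν g p ≤ R ↔
      ∀ t : ℝ, 0 < t → ν {y | ENNReal.ofReal t < g y} ≤ (R / ENNReal.ofReal t) ^ p := by
  simp only [wnormAbs, iSup_le_iff]
  refine forall₂_congr fun t ht => ?_
  rw [mul_comm, ← ENNReal.le_div_iff_mul_le (.inl (by simpa using ht)) (.inl ofReal_ne_top),
    one_div, ENNReal.rpow_inv_le_iff hp]

lemma wnormAbs_iSup_le {ι : Type*} [Countable ι] {g : ι → Y → ℝ≥0∞}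
    (hg : Directed (· ≤ ·) g) (hp : 0 < p) {R : ℝ≥0∞} (hR : ∀ i, wnormAbs ν (g i) p ≤ R) :
    wnormAbs ν (fun y => ⨆ i, g i y) p ≤ R := by
  refine (wnormAbs_le_iff hp).2 fun t ht => ?_
  have hunion : {y | ENNReal.ofReal t < ⨆ i, g i y} = ⋃ i, {y | ENNReal.ofReal t < g i y} := by
    ext y
    simp [lt_iSup_iff]
  rw [hunion, Directed.measure_iUnion]
  · exact iSup_le fun i => (wnormAbs_le_iff hp).1 (hR i) t ht
  · intro i j
    obtain ⟨k, hik, hjk⟩ := hg i j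
    exact ⟨k, fun y hy => lt_of_lt_of_le hy (hik y), fun y hy => lt_of_lt_of_le hy (hjk y)⟩

lemma wnormAbs_ofReal_mul_le {c : ℝ} (hc : 0 < c) (g : Y → ℝ≥0∞) :
    wnormAbs ν (fun y => ENNReal.ofReal c * g y) p ≤ ENNReal.ofReal c * wnormAbs ν g p := by
  refine iSup₂_le fun t ht => ?_
  have hset : {y | ENNReal.ofReal t < ENNReal.ofReal c * g y}
      = {y | ENNReal.ofReal (t / c) < g y} := by
    ext y
    rw [mem_ofPred_eq, mem_ofPred_eq, ENNReal.ofReal_div_of_pos hc,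
      ENNReal.div_lt_iff (.inl (by simpa using hc)) (.inl ofReal_ne_top), mul_comm]
  calc ENNReal.ofReal t * ν {y | ENNReal.ofReal t < ENNReal.ofReal c * g y} ^ (1 / p)
      = ENNReal.ofReal c *
          (ENNReal.ofReal (t / c) * ν {y | ENNReal.ofReal (t / c) < g y} ^ (1 / p)) := by
        rw [hset, ← mul_assoc, ← ENNReal.ofReal_mul hc.le, mul_div_cancel₀ _ hc.ne']
    _ ≤ ENNReal.ofReal c * wnormAbs ν g p := by
        gcongr
        exact le_iSup₂_of_le (t / c) (div_pos ht hc) le_rfl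

end WeakNorm

lemma measure_mul_lt_le_inv {Ω : Type*} [MeasurableSpace Ω] {P : Measure Ω} {f : Ω → ℝ≥0∞}
    (hfm : AEMeasurable f P) {a ρ : ℝ≥0∞} (hf : ∫⁻ ω, f ω ∂P ≤ a) (hρ : ρ ≠ 0) :
    P {ω | ρ * a < f ω} ≤ ρ⁻¹ := by
  rcases eq_or_ne a 0 with rfl | ha0
  · have hf0 : f =ᵐ[P] 0 := (lintegral_eq_zero_iff' hfm).1 (le_zero_iff.1 hf)
    have : P {ω | ρ * 0 < f ω} = 0 := by simpa [pos_iff_ne_zero] using ae_iff.1 hf0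
    simp only [this, zero_le]
  rcases eq_or_ne a ⊤ with rfl | ha
  · simp [ENNReal.mul_top hρ]
  have hmarkov : ρ * a * P {ω | ρ * a < f ω} ≤ a :=
    calc ρ * a * P {ω | ρ * a < f ω} ≤ ρ * a * P {ω | ρ * a ≤ f ω} := by
          gcongr with ω
          exact le_of_lt
      _ ≤ a := (mul_meas_ge_le_lintegral₀ hfm _).trans hf
  rw [ENNReal.le_inv_iff_mul_le, ← ENNReal.mul_le_mul_iff_left ha0 ha]
  calc P {ω | ρ * a < f ω} * ρ * a = ρ * a * P {ω | ρ * a < f ω} := by ring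
    _ ≤ 1 * a := by rwa [one_mul]

lemma half_le_measure_inter {Ω : Type*} [MeasurableSpace Ω] {P : Measure Ω} {δ : ℝ≥0∞}
    {L G : Set Ω} (hδ : δ ≠ ⊤) (hL : δ ≤ P L) (hG : P Gᶜ ≤ δ / 2) : δ / 2 ≤ P (L ∩ G) := by
  rw [← ENNReal.sub_half hδ, tsub_le_iff_right]
  calc δ ≤ P ((L ∩ G) ∪ Gᶜ) := hL.trans (measure_mono fun ω hω => by
        by_cases h : ω ∈ G <;> simp [h, hω])
    _ ≤ P (L ∩ G) + δ / 2 := (measure_union_le _ _).trans (by gcongr)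

section Fibers

variable {Ω Y : Type*} [MeasurableSpace Ω] [Countable Ω] [DiscreteMeasurableSpace Ω]
  [MeasurableSpace Y] {P : Measure Ω} {ν : Measure Y}

lemma lintegral_lintegral_swap_of_countable {g : Ω → Y → ℝ≥0∞}
    (hg : ∀ ω, AEMeasurable (g ω) ν) :
    ∫⁻ ω, ∫⁻ y, g ω y ∂ν ∂P = ∫⁻ y, ∫⁻ ω, g ω y ∂P ∂ν := by
  simp only [lintegral_countable', ← lintegral_mul_const'' _ (hg _)]
  exact (lintegral_tsum fun ω => (hg ω).mul_const _).symm

lemma mul_measure_le_lintegral_measure {δ : ℝ≥0∞} {A : Set Y} {B : Ω → Set Y}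
    (h : ∀ᵐ y ∂ν, y ∈ A → δ ≤ P {ω | y ∈ B ω}) :
    δ * ν A ≤ ∫⁻ ω, ν (B ω) ∂P := by
  set B' : Ω → Set Y := fun ω => toMeasurable ν (B ω)
  have hB' : ∀ ω, MeasurableSet (B' ω) := fun ω => measurableSet_toMeasurable ν (B ω)
  have hfiber : ∀ y, ∫⁻ ω, (B' ω).indicator 1 y ∂P = P {ω | y ∈ B' ω} := fun y =>
    lintegral_indicator_one (.of_discrete (s := {ω | y ∈ B' ω}))
  calc δ * ν A ≤ δ * ν {y | δ ≤ ∫⁻ ω, (B' ω).indicator 1 y ∂P} := by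
        gcongr 1
        refine measure_mono_ae (h.mono fun y hy hyA => ?_)
        simp only [hfiber]
        exact (hy hyA).trans (measure_mono fun ω hω => subset_toMeasurable ν (B ω) hω)
    _ ≤ ∫⁻ y, ∫⁻ ω, (B' ω).indicator 1 y ∂P ∂ν := by
        refine mul_meas_ge_le_lintegral₀ ?_ δ
        simp only [lintegral_countable']
        fun_prop (disch := measurability)
    _ = ∫⁻ ω, ν (B ω) ∂P := by
        rw [← lintegral_lintegral_swap_of_countable
          fun ω => (measurable_one.indicator (hB' ω)).aemeasurable]
        simp only [lintegral_indicator_one (hB' _), B', measure_toMeasurable]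

-- Tonelli over the level sets turns a bound with probability at least `δ` at almost every point
-- into a bound on the weak norm.
lemma wnormAbs_le_of_le_measure [IsProbabilityMeasure P] {p : ℝ} {h : Y → ℝ≥0∞}
    {g : Ω → Y → ℝ≥0∞} {δ R : ℝ≥0∞} (hp : 0 < p) (hδ0 : δ ≠ 0) (hδ : δ ≠ ⊤)
    (hh : ∀ᵐ y ∂ν, δ ≤ P {ω | h y ≤ g ω y}) (hg : P {ω | wnormAbs ν (g ω) p ≤ R}ᶜ ≤ δ / 2) :
    wnormAbs ν h p ≤ (2 / δ) ^ (1 / p) * R := by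
  set G : Set Ω := {ω | wnormAbs ν (g ω) p ≤ R}
  refine (wnormAbs_le_iff hp).2 fun t ht => ?_
  set B : Ω → Set Y := fun ω => {y | ENNReal.ofReal t < g ω y ∧ ω ∈ G}
  have hfiber : ∀ᵐ y ∂ν, y ∈ {y | ENNReal.ofReal t < h y} → δ / 2 ≤ P {ω | y ∈ B ω} :=
    hh.mono fun y hy hty => (half_le_measure_inter hδ hy hg).trans <|
      measure_mono fun ω hω => ⟨hty.trans_le hω.1, hω.2⟩
  have hB : ∀ ω, ν (B ω) ≤ (R / ENNReal.ofReal t) ^ p := fun ω => by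
    by_cases hω : ω ∈ G
    · exact (measure_mono fun y hy => hy.1).trans ((wnormAbs_le_iff hp).1 hω t ht)
    · simp [B, hω]
  have hmean : δ / 2 * ν {y | ENNReal.ofReal t < h y} ≤ (R / ENNReal.ofReal t) ^ p := by
    refine (mul_measure_le_lintegral_measure hfiber).trans ((lintegral_mono hB).trans_eq ?_)
    rw [lintegral_const, measure_univ, mul_one]
  calc ν {y | ENNReal.ofReal t < h y} = 2 / δ * (δ / 2 * ν {y | ENNReal.ofReal t < h y}) := by
        rw [← mul_assoc, ← ENNReal.inv_div (by simp) (by simp),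
          ENNReal.inv_mul_cancel (by simpa using hδ0) (by finiteness), one_mul]
    _ ≤ 2 / δ * (R / ENNReal.ofReal t) ^ p := by gcongr
    _ = ((2 / δ) ^ (1 / p) * R / ENNReal.ofReal t) ^ p := by
        rw [mul_div_assoc, ENNReal.mul_rpow_of_nonneg _ _ hp.le, one_div,
          ENNReal.rpow_inv_rpow hp.ne']

end Fibers

lemma ofReal_abs_rpow {q : ℝ} (hq : 0 ≤ q) (x : ℝ) : ENNReal.ofReal (|x| ^ q) = ‖x‖ₑ ^ q := by
  rw [Real.enorm_eq_ofReal_abs, ENNReal.ofReal_rpow_of_nonneg (abs_nonneg x) hq]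

section Moments

variable {Ω : Type*} [MeasurableSpace Ω] {P : Measure Ω}

lemma lintegral_enorm_sum_rpow_le_of_unit {ι : Type*} [Fintype ι] {ξ : Ω → ι → ℝ} {q r : ℝ}
    (hq : 0 < q) (hr : 0 < r) {C : ℝ≥0∞}
    (h : ∀ b : ι → ℝ, ∑ k, |b k| ^ r ≤ 1 → ∫⁻ ω, ‖∑ k, b k * ξ ω k‖ₑ ^ q ∂P ≤ C) (b : ι → ℝ) :
    ∫⁻ ω, ‖∑ k, b k * ξ ω k‖ₑ ^ q ∂P ≤ C * (∑ k, ‖b k‖ₑ ^ r) ^ (q / r) := by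
  have hnn : ∀ k ∈ Finset.univ, 0 ≤ |b k| ^ r := fun k _ => by positivity
  set s : ℝ := ∑ k, |b k| ^ r
  have hs_enorm : (∑ k, ‖b k‖ₑ ^ r) ^ (q / r) = ‖s ^ (1 / r)‖ₑ ^ q := by
    have hs0 : 0 ≤ s := Finset.sum_nonneg hnn
    simp only [← ofReal_abs_rpow hr.le]
    rw [← ENNReal.ofReal_sum_of_nonneg hnn, Real.enorm_eq_ofReal (by positivity),
      ← ENNReal.ofReal_rpow_of_nonneg hs0 (by positivity), ← ENNReal.rpow_mul, one_div_mul_eq_div]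
  rcases (Finset.sum_nonneg hnn).eq_or_lt with hs0 | hs0
  · have hb : ∀ k, b k = 0 := fun k => by
      have := (Finset.sum_eq_zero_iff_of_nonneg hnn).1 hs0.symm k (Finset.mem_univ k)
      simpa [Real.rpow_eq_zero_iff_of_nonneg, hr.ne'] using this
    simp [hb, hq]
  have hunit : ∑ k, |b k / s ^ (1 / r)| ^ r ≤ 1 := by
    have hdiv : ∀ k, |b k / s ^ (1 / r)| ^ r = |b k| ^ r / s := fun k => by
      rw [abs_div, Real.div_rpow (abs_nonneg _) (abs_nonneg _), abs_of_pos (a := s ^ (1 / r))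
        (by positivity), one_div, Real.rpow_inv_rpow hs0.le hr.ne']
    rw [Finset.sum_congr rfl fun k _ => hdiv k, ← Finset.sum_div]
    exact div_self_le_one s
  have hscale : ∀ ω, ‖∑ k, b k * ξ ω k‖ₑ ^ q
      = ‖∑ k, b k / s ^ (1 / r) * ξ ω k‖ₑ ^ q * ‖s ^ (1 / r)‖ₑ ^ q := fun ω => by
    rw [← ENNReal.mul_rpow_of_nonneg _ _ hq.le, ← enorm_mul, Finset.sum_mul]
    congr! 3 with k
    rw [mul_right_comm, div_mul_cancel₀ _ (Real.rpow_pos_of_pos hs0 _).ne']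
  simp only [hscale, hs_enorm]
  rw [lintegral_mul_const' _ _ (ENNReal.rpow_ne_top_of_nonneg hq.le enorm_ne_top)]
  gcongr
  exact h _ hunit

lemma sq_lintegral_sub_le [IsProbabilityMeasure P] {f : Ω → ℝ≥0∞} (hf : AEMeasurable f P)
    (a : ℝ≥0∞) : (∫⁻ ω, f ω ∂P - a) ^ 2 ≤ (∫⁻ ω, f ω ^ 2 ∂P) * P {ω | a ≤ f ω} := by
  set E : Set Ω := {ω | a ≤ f ω}
  have hE : NullMeasurableSet E P := nullMeasurableSet_le aemeasurable_const hf
  have hsplit : ∫⁻ ω, f ω ∂P ≤ ∫⁻ ω, f ω * E.indicator 1 ω ∂P + a := by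
    calc ∫⁻ ω, f ω ∂P ≤ ∫⁻ ω, (f ω * E.indicator 1 ω + a) ∂P := by
          refine lintegral_mono fun ω => ?_
          by_cases hω : a ≤ f ω
          · simp [hω, E]
          · exact (not_le.1 hω).le.trans le_add_self
      _ = ∫⁻ ω, f ω * E.indicator 1 ω ∂P + a := by
          rw [lintegral_add_right _ measurable_const, lintegral_const, measure_univ, mul_one]
  have hind : ∫⁻ ω, E.indicator (1 : Ω → ℝ≥0∞) ω ^ (2 : ℝ) ∂P = P E := by
    rw [← lintegral_indicator_one₀ hE]
    congr with ω
    by_cases hω : ω ∈ E <;> simp [hω]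
  calc (∫⁻ ω, f ω ∂P - a) ^ 2 ≤ (∫⁻ ω, f ω * E.indicator 1 ω ∂P) ^ 2 := by
        gcongr
        exact tsub_le_iff_right.2 hsplit
    _ ≤ ((∫⁻ ω, f ω ^ (2 : ℝ) ∂P) ^ (1 / 2 : ℝ) * (P E) ^ (1 / 2 : ℝ)) ^ 2 := by
        gcongr
        rw [← hind]
        exact ENNReal.lintegral_mul_le_Lp_mul_Lq P .two_two hf (aemeasurable_one.indicator₀ hE)
    _ = (∫⁻ ω, f ω ^ 2 ∂P) * P E := by
        rw [← ENNReal.mul_rpow_of_nonneg _ _ (by norm_num), ← ENNReal.rpow_two, ← ENNReal.rpow_mul]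
        norm_num [ENNReal.rpow_two]

lemma lintegral_sq_sum_le {J : Type*} {s : Finset J} {f : J → Ω → ℝ≥0∞}
    (hf : ∀ j ∈ s, AEMeasurable (f j) P) {C : ℝ≥0∞} {c : J → ℝ≥0∞}
    (h : ∀ j ∈ s, ∫⁻ ω, f j ω ^ 2 ∂P ≤ C * c j ^ 2) :
    ∫⁻ ω, (∑ j ∈ s, f j ω) ^ 2 ∂P ≤ C * (∑ j ∈ s, c j) ^ 2 := by
  have hsqrt : ∀ x : ℝ≥0∞, (x ^ (1 / 2 : ℝ)) ^ 2 = x := fun x => by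
    rw [← ENNReal.rpow_mul_natCast]
    norm_num
  have hmink := calc
    (∫⁻ ω, (∑ j ∈ s, f j ω) ^ 2 ∂P) ^ (1 / 2 : ℝ)
      ≤ ∑ j ∈ s, (∫⁻ ω, f j ω ^ 2 ∂P) ^ (1 / 2 : ℝ) := by
        simpa [eLpNorm'] using
          eLpNorm'_sum_le (fun j hj => (hf j hj).aestronglyMeasurable) one_le_two
    _ ≤ ∑ j ∈ s, (C * c j ^ 2) ^ (1 / 2 : ℝ) := by
        gcongr with j hj
        exact h j hj
    _ = C ^ (1 / 2 : ℝ) * ∑ j ∈ s, c j := by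
        rw [Finset.mul_sum]
        congr! 2 with j
        rw [ENNReal.mul_rpow_of_nonneg _ _ (by norm_num), ← ENNReal.rpow_natCast_mul]
        norm_num
  calc ∫⁻ ω, (∑ j ∈ s, f j ω) ^ 2 ∂P ≤ (C ^ (1 / 2 : ℝ) * ∑ j ∈ s, c j) ^ 2 := by
        rw [← hsqrt (∫⁻ ω, _ ∂P)]
        gcongr
    _ = C * (∑ j ∈ s, c j) ^ 2 := by rw [mul_pow, hsqrt]

end Moments

section Rademacher

instance : MeasurableSingletonClass ℤˣ where
  measurableSet_singleton u :=
    ⟨{(u : ℤ)}, .of_discrete, by ext v; simp [Units.ext_iff]⟩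

/-- The law of independent uniform random signs indexed by `ι`, with `ℤˣ = {1, -1}` as the set of
signs so that flipping some of them is a left translation. -/
def rademacher (ι : Type*) [Fintype ι] : Measure (ι → ℤˣ) :=
  Measure.pi fun _ => (2 : ℝ≥0∞)⁻¹ • Measure.count

variable {ι : Type*} [Fintype ι]

instance : IsProbabilityMeasure ((2 : ℝ≥0∞)⁻¹ • (Measure.count : Measure ℤˣ)) where
  measure_univ := by
    simp [Measure.count_univ, ENNReal.inv_mul_cancel]

instance : IsProbabilityMeasure (rademacher ι) :=
  inferInstanceAs (IsProbabilityMeasure (Measure.pi _))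

instance : (rademacher ι).IsMulLeftInvariant :=
  Measure.pi.isMulLeftInvariant _

lemma integral_exp_sum_rademacher (b : ι → ℝ) :
    ∫ ε, Real.exp (∑ k, b k * (ε k : ℤ)) ∂rademacher ι = ∏ k, Real.cosh (b k) := by
  have hcosh : ∀ x : ℝ,
      ∫ u : ℤˣ, Real.exp (x * (u : ℤ)) ∂((2 : ℝ≥0∞)⁻¹ • Measure.count) = Real.cosh x := fun x => by
    simp only [integral_smul_measure, toReal_inv, toReal_ofNat, integral_count, UnitsInt.univ,
      Finset.sum_pair (units_ne_neg_self 1), Units.val_one, Units.val_neg, Int.cast_one,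
      Int.cast_neg, mul_one, mul_neg, smul_eq_mul, Real.cosh_eq]
    ring
  simp only [Real.exp_sum, rademacher, ← hcosh]
  exact integral_fintype_prod_eq_prod fun k (u : ℤˣ) => Real.exp (b k * (u : ℤ))

lemma abs_rpow_le_exp_add_exp {q : ℝ} (hq : 0 < q) (x : ℝ) :
    |x| ^ q ≤ q ^ q * (Real.exp x + Real.exp (-x)) := by
  have habs : |x| ≤ q * Real.exp (|x| / q) :=
    calc |x| = q * (|x| / q) := by field_simp
      _ ≤ q * Real.exp (|x| / q) := by
        gcongr
        linarith [Real.add_one_le_exp (|x| / q)]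
  calc |x| ^ q ≤ (q * Real.exp (|x| / q)) ^ q := by gcongr
    _ = q ^ q * Real.exp |x| := by
      rw [Real.mul_rpow hq.le (Real.exp_pos _).le, ← Real.exp_mul, div_mul_cancel₀ _ hq.ne']
    _ ≤ q ^ q * (Real.exp x + Real.exp (-x)) := by
      gcongr
      exact Real.exp_abs_le x

/-- The constant in the upper Khintchine inequality for the exponent `q`. -/
def khintchineConst (q : ℝ) : ℝ≥0∞ := ENNReal.ofReal (q ^ q * (2 * Real.exp (1 / 2)))

lemma khintchineConst_ne_top {q : ℝ} : khintchineConst q ≠ ⊤ := ENNReal.ofReal_ne_top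

lemma one_le_khintchineConst {q : ℝ} (hq : 1 ≤ q) : 1 ≤ khintchineConst q := by
  refine ENNReal.one_le_ofReal.2 (one_le_mul_of_one_le_of_one_le ?_ ?_)
  · exact Real.one_le_rpow hq (by positivity)
  · linarith [Real.add_one_le_exp (1 / 2)]

lemma khintchine_of_sum_sq_le_one {q : ℝ} (hq : 0 < q) {b : ι → ℝ} (hb : ∑ k, b k ^ 2 ≤ 1) :
    ∫⁻ ε, ‖∑ k, b k * (ε k : ℤ)‖ₑ ^ q ∂rademacher ι ≤ khintchineConst q := by
  have hexp : ∀ c : ι → ℝ, ∑ k, c k ^ 2 ≤ 1 →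
      ∫ ε, Real.exp (∑ k, c k * (ε k : ℤ)) ∂rademacher ι ≤ Real.exp (1 / 2) := fun c hc =>
    calc ∫ ε, Real.exp (∑ k, c k * (ε k : ℤ)) ∂rademacher ι = ∏ k, Real.cosh (c k) :=
          integral_exp_sum_rademacher c
      _ ≤ ∏ k, Real.exp (c k ^ 2 / 2) := by
          refine Finset.prod_le_prod (fun k _ => (Real.cosh_pos _).le) fun k _ => ?_
          exact Real.cosh_le_exp_half_sq _
      _ ≤ Real.exp (1 / 2) := by
          rw [← Real.exp_sum, ← Finset.sum_div]
          gcongr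
  simp only [← ofReal_abs_rpow hq.le]
  rw [← ofReal_integral_eq_lintegral_ofReal .of_finite (.of_forall fun _ => by positivity)]
  refine ENNReal.ofReal_le_ofReal ?_
  calc ∫ ε, |∑ k, b k * (ε k : ℤ)| ^ q ∂rademacher ι
      ≤ ∫ ε, q ^ q * (Real.exp (∑ k, b k * (ε k : ℤ)) + Real.exp (∑ k, -b k * (ε k : ℤ)))
          ∂rademacher ι := by
        refine integral_mono .of_finite .of_finite fun ε => ?_
        simpa [Finset.sum_neg_distrib] using abs_rpow_le_exp_add_exp hq (∑ k, b k * (ε k : ℤ))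
    _ ≤ q ^ q * (2 * Real.exp (1 / 2)) := by
        rw [integral_const_mul, integral_add .of_finite .of_finite]
        gcongr
        linarith [hexp b hb, hexp (fun k => -b k) (by simpa using hb)]

lemma khintchine_upper {q : ℝ} (hq : 0 < q) (b : ι → ℝ) :
    ∫⁻ ε, ‖∑ k, b k * (ε k : ℤ)‖ₑ ^ q ∂rademacher ι
      ≤ khintchineConst q * (∑ k, ‖b k‖ₑ ^ (2 : ℝ)) ^ (q / 2) :=
  lintegral_enorm_sum_rpow_le_of_unit hq two_pos
    (fun c hc => khintchine_of_sum_sq_le_one hq (by simpa using hc)) b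

lemma integral_mul_rademacher [DecidableEq ι] (k l : ι) :
    ∫ ε, ((ε k : ℤ) : ℝ) * (ε l : ℤ) ∂rademacher ι = if k = l then 1 else 0 := by
  split_ifs with h
  · subst h
    simp [← Int.cast_mul, ← Units.val_mul]
  · have hflip := integral_mul_left_eq_self (μ := rademacher ι)
      (fun ε => ((ε k : ℤ) : ℝ) * (ε l : ℤ)) (Pi.mulSingle k (-1))
    simp only [Pi.mul_apply, Pi.mulSingle_eq_same, Pi.mulSingle_eq_of_ne' h, neg_mul, one_mul,
      Units.val_neg, Int.cast_neg, integral_neg] at hflip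
    linarith

lemma lintegral_sum_rpow_two_rademacher (b : ι → ℝ) :
    ∫⁻ ε, ‖∑ k, b k * (ε k : ℤ)‖ₑ ^ (2 : ℝ) ∂rademacher ι = ∑ k, ‖b k‖ₑ ^ (2 : ℝ) := by
  classical
  simp only [← ofReal_abs_rpow zero_le_two, Real.rpow_two, sq_abs]
  rw [← ofReal_integral_eq_lintegral_ofReal .of_finite (.of_forall fun _ => sq_nonneg _),
    ← ENNReal.ofReal_sum_of_nonneg fun k _ => sq_nonneg _]
  congr 1
  calc ∫ ε, (∑ k, b k * (ε k : ℤ)) ^ 2 ∂rademacher ι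
      = ∫ ε, ∑ k, ∑ l, b k * b l * ((ε k : ℤ) * (ε l : ℤ)) ∂rademacher ι := by
        simp only [sq, Finset.sum_mul_sum, mul_mul_mul_comm]
    _ = ∑ k, ∑ l, b k * b l * if k = l then 1 else 0 := by
        simp only [integral_finsetSum _ fun _ _ => Integrable.of_finite, integral_const_mul,
          integral_mul_rademacher]
    _ = ∑ k, b k ^ 2 := by simp [sq]

lemma enorm_rpow_le_sum_add_sum_flip [DecidableEq ι] {r : ℝ} (hr : 0 < r) (a : ι → ℝ) (k₀ : ι)
    (ε : ι → ℤˣ) :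
    ‖a k₀‖ₑ ^ r ≤ ‖∑ k, a k * (ε k : ℤ)‖ₑ ^ r
      + ‖∑ k, a k * ((Pi.mulSingle k₀ (-1) * ε : ι → ℤˣ) k : ℤ)‖ₑ ^ r := by
  set u : ℝ := ∑ k, a k * (ε k : ℤ)
  set v : ℝ := ∑ k, a k * ((Pi.mulSingle k₀ (-1) * ε : ι → ℤˣ) k : ℤ)
  have hdiff : u - v = 2 * (a k₀ * (ε k₀ : ℤ)) := by
    rw [← Finset.sum_sub_distrib, Finset.sum_eq_single k₀]
    · simp only [Pi.mul_apply, Pi.mulSingle_eq_same, neg_mul, one_mul, Units.val_neg, Int.cast_neg,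
        mul_neg, sub_neg_eq_add]
      ring
    · intro k _ hk
      simp [Pi.mulSingle_eq_of_ne hk]
    · simp
  have hmax : |a k₀| ≤ max |u| |v| := by
    have hsign : |a k₀ * (ε k₀ : ℤ)| = |a k₀| := by
      rw [abs_mul, ← Int.cast_abs, Int.isUnit_iff_abs_eq.1 (ε k₀).isUnit, Int.cast_one, mul_one]
    have := abs_sub u v
    rw [hdiff, abs_mul, abs_two, hsign] at this
    linarith [le_max_left |u| |v|, le_max_right |u| |v|]
  simp only [Real.enorm_eq_ofReal_abs]
  rcases le_max_iff.1 hmax with h | h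
  · exact le_add_right (by gcongr)
  · exact le_add_left (by gcongr)

lemma inv_two_le_rademacher_of_coord {r : ℝ} (hr : 0 < r) {J : Type*} (s : Finset J)
    (a : J → ι → ℝ) (k₀ : ι) :
    2⁻¹ ≤ rademacher ι {ε | (2⁻¹ : ℝ≥0∞) * ∑ j ∈ s, ‖a j k₀‖ₑ ^ r
      ≤ ∑ j ∈ s, ‖∑ k, a j k * (ε k : ℤ)‖ₑ ^ r} := by
  classical
  set φ : (ι → ℤˣ) → ℝ≥0∞ := fun ε => ∑ j ∈ s, ‖∑ k, a j k * (ε k : ℤ)‖ₑ ^ r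
  set A : ℝ≥0∞ := ∑ j ∈ s, ‖a j k₀‖ₑ ^ r
  set flip : (ι → ℤˣ) → (ι → ℤˣ) := fun ε => Pi.mulSingle k₀ (-1) * ε
  have hA : ∀ ε, A ≤ φ ε + φ (flip ε) := fun ε => by
    rw [← Finset.sum_add_distrib]
    exact Finset.sum_le_sum fun j _ => enorm_rpow_le_sum_add_sum_flip hr (a j) k₀ ε
  have hcover : univ ⊆ {ε | 2⁻¹ * A ≤ φ ε} ∪ flip ⁻¹' {ε | 2⁻¹ * A ≤ φ ε} := by
    rintro ε -
    by_contra! h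
    simp only [mem_union, mem_preimage, not_or, mem_ofPred_eq, not_le] at h
    refine (ENNReal.add_lt_add h.1 h.2).not_ge ?_
    rw [← add_mul, ENNReal.inv_two_add_inv_two, one_mul]
    exact hA ε
  rw [ENNReal.inv_le_iff_le_mul (by simp) (by simp), two_mul]
  calc 1 = rademacher ι univ := measure_univ.symm
    _ ≤ rademacher ι {ε | 2⁻¹ * A ≤ φ ε} + rademacher ι (flip ⁻¹' {ε | 2⁻¹ * A ≤ φ ε}) :=
        (measure_mono hcover).trans (measure_union_le _ _)
    _ = rademacher ι {ε | 2⁻¹ * A ≤ φ ε} + rademacher ι {ε | 2⁻¹ * A ≤ φ ε} := by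
        rw [measure_preimage_mul]

lemma lintegral_sq_sum_rademacher_le {J : Type*} (s : Finset J) (a : J → ι → ℝ) :
    ∫⁻ ε, (∑ j ∈ s, ‖∑ k, a j k * (ε k : ℤ)‖ₑ ^ (2 : ℝ)) ^ 2 ∂rademacher ι
      ≤ khintchineConst 4 * (∑ j ∈ s, ∑ k, ‖a j k‖ₑ ^ (2 : ℝ)) ^ 2 := by
  refine lintegral_sq_sum_le (fun j _ => .of_discrete) fun j _ => ?_
  simp only [← ENNReal.rpow_mul_natCast]
  refine (le_of_eq ?_).trans ((khintchine_upper four_pos (a j)).trans_eq ?_)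
  · norm_num
  · rw [← ENNReal.rpow_natCast]
    norm_num

lemma paley_zygmund_rademacher {J : Type*} (s : Finset J) (a : J → ι → ℝ) :
    4⁻¹ / khintchineConst 4 ≤ rademacher ι
      {ε | (2⁻¹ : ℝ≥0∞) * ∑ j ∈ s, ∑ k, ‖a j k‖ₑ ^ (2 : ℝ)
        ≤ ∑ j ∈ s, ‖∑ k, a j k * (ε k : ℤ)‖ₑ ^ (2 : ℝ)} := by
  set φ : (ι → ℤˣ) → ℝ≥0∞ := fun ε => ∑ j ∈ s, ‖∑ k, a j k * (ε k : ℤ)‖ₑ ^ (2 : ℝ)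
  set M : ℝ≥0∞ := ∑ j ∈ s, ∑ k, ‖a j k‖ₑ ^ (2 : ℝ)
  rcases eq_or_ne M 0 with hM0 | hM0
  · simp only [hM0, mul_zero, zero_le, ofPred_true, measure_univ]
    exact ENNReal.div_le_of_le_mul ((by norm_num : (4 : ℝ≥0∞)⁻¹ ≤ 1).trans
      (by simpa using one_le_khintchineConst (by norm_num : (1 : ℝ) ≤ 4)))
  have hMtop : M ≠ ⊤ :=
    ENNReal.sum_ne_top.2 fun j _ => ENNReal.sum_ne_top.2 fun k _ => by finiteness
  have hmean : ∫⁻ ε, φ ε ∂rademacher ι = M := by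
    rw [lintegral_finsetSum' _ fun j _ => .of_discrete]
    exact Finset.sum_congr rfl fun j _ => lintegral_sum_rpow_two_rademacher (a j)
  have hPZ := calc
    (M * 2⁻¹) ^ 2 = (∫⁻ ε, φ ε ∂rademacher ι - 2⁻¹ * M) ^ 2 := by
        rw [hmean, mul_comm, ← ENNReal.div_eq_inv_mul, ENNReal.sub_half hMtop]
    _ ≤ khintchineConst 4 * M ^ 2 * rademacher ι {ε | 2⁻¹ * M ≤ φ ε} :=
        (sq_lintegral_sub_le .of_discrete _).trans
          (mul_le_mul_left (lintegral_sq_sum_rademacher_le s a) _)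
  rw [mul_pow, mul_comm, mul_right_comm,
    ENNReal.mul_le_mul_iff_left (by positivity) (by finiteness)] at hPZ
  refine ENNReal.div_le_of_le_mul' ((le_of_eq ?_).trans hPZ)
  rw [← ENNReal.inv_pow]
  norm_num

end Rademacher

section RealInequalities

lemma add_rpow_le_rpow_add_min {A x : ℝ≥0∞} {s : ℝ} (hA : 1 ≤ A) (hs0 : 0 < s) (hs1 : s ≤ 1) :
    (A + x) ^ s ≤ A ^ s + min x (x ^ s) := by
  rcases eq_or_ne (A + x) ⊤ with htop | htop
  · rcases ENNReal.add_eq_top.1 htop with rfl | rfl <;> simp [hs0]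
  rw [← min_add_add_left]
  refine le_min ?_ (ENNReal.rpow_add_le_add_rpow A x hs0.le hs1)
  have hdiv : ∀ B : ℝ≥0∞, A ≤ B → B ≠ ⊤ → B ^ s = B / B ^ (1 - s) := fun B hAB hB => by
    have hB0 : B ≠ 0 := (one_pos.trans_le (hA.trans hAB)).ne'
    conv_rhs => rw [← ENNReal.rpow_one B, ← ENNReal.rpow_mul, one_mul,
      ← ENNReal.rpow_sub _ _ hB0 hB, _root_.sub_sub_cancel]
  have hle : A ≤ A + x := le_self_add
  calc (A + x) ^ s = A / (A + x) ^ (1 - s) + x / (A + x) ^ (1 - s) := by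
        rw [hdiv _ hle htop, ENNReal.add_div]
    _ ≤ A / A ^ (1 - s) + x / 1 := by
        gcongr
        simpa using ENNReal.rpow_le_rpow (hA.trans hle) (sub_nonneg.2 hs1)
    _ = A ^ s + x := by rw [← hdiv A le_rfl (ENNReal.add_ne_top.1 htop).1, div_one]

lemma one_add_sum_rpow_le {ι : Type*} (t : Finset ι) (x : ι → ℝ≥0∞) {s : ℝ} (hs0 : 0 < s)
    (hs1 : s ≤ 1) : (1 + ∑ k ∈ t, x k) ^ s ≤ 1 + ∑ k ∈ t, min (x k) (x k ^ s) := by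
  classical
  induction t using Finset.induction_on with
  | empty => simp
  | insert k t hk ih =>
    rw [Finset.sum_insert hk, Finset.sum_insert hk, add_comm (x k), add_comm (min _ _),
      ← add_assoc, ← add_assoc]
    exact (add_rpow_le_rpow_add_min le_self_add hs0 hs1).trans (by gcongr)

lemma min_inv_le_telescope {ρ z : ℝ} (hρ : 1 < ρ) (hz : 0 < z) :
    min z z⁻¹ ≤ 2 * (1 + ρ) / (ρ - 1) * (ρ * z / (1 + ρ * z) - z / (1 + z)) := by
  have hρ' : 0 < ρ - 1 := sub_pos.2 hρ
  have hdiff : 2 * (1 + ρ) / (ρ - 1) * (ρ * z / (1 + ρ * z) - z / (1 + z)) =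
      2 * (1 + ρ) * z / ((1 + ρ * z) * (1 + z)) := by
    field_simp
    ring
  rw [hdiff, le_div_iff₀ (by positivity)]
  rcases le_total z 1 with h | h
  · calc min z z⁻¹ * ((1 + ρ * z) * (1 + z)) ≤ z * ((1 + ρ * 1) * (1 + 1)) := by
          gcongr
          exact min_le_left _ _
      _ = 2 * (1 + ρ) * z := by ring
  · calc min z z⁻¹ * ((1 + ρ * z) * (1 + z)) ≤ z⁻¹ * ((z + ρ * z) * (z + z)) := by
          gcongr
          exact min_le_right _ _
      _ = 2 * (1 + ρ) * z := by
          field_simp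
          ring

lemma sum_range_min_pow_mul_inv_le {ρ z : ℝ} (hρ : 1 < ρ) (hz : 0 < z) (N : ℕ) :
    ∑ n ∈ Finset.range N, min (ρ ^ n * z) (ρ ^ n * z)⁻¹ ≤ 2 * (1 + ρ) / (ρ - 1) := by
  have : 0 < ρ - 1 := sub_pos.2 hρ
  set φ : ℕ → ℝ := fun n => ρ ^ n * z / (1 + ρ ^ n * z)
  have hφ : φ N - φ 0 ≤ 1 := by
    have h0 : 0 ≤ φ 0 := by positivity
    have hN : φ N ≤ 1 := div_le_one_of_le₀ (by linarith) (by positivity)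
    linarith
  calc ∑ n ∈ Finset.range N, min (ρ ^ n * z) (ρ ^ n * z)⁻¹
      ≤ ∑ n ∈ Finset.range N, 2 * (1 + ρ) / (ρ - 1) * (φ (n + 1) - φ n) := by
        gcongr with n
        have := min_inv_le_telescope hρ (z := ρ ^ n * z) (by positivity)
        rwa [← mul_assoc, ← pow_succ'] at this
    _ = 2 * (1 + ρ) / (ρ - 1) * (φ N - φ 0) := by
        rw [← Finset.mul_sum, Finset.sum_range_sub]
    _ ≤ 2 * (1 + ρ) / (ρ - 1) := mul_le_of_le_one_right (by positivity) hφ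

lemma min_rpow_le_rpow_mul_min {y α r β γ : ℝ} (hy : 0 < y) (hγα : γ ≤ α - r) (hγβ : γ ≤ r - β)
    (hγ : 0 ≤ γ) : min (y ^ α) (y ^ β) ≤ y ^ r * min (y ^ γ) (y ^ γ)⁻¹ := by
  rw [← Real.rpow_neg hy.le, mul_min_of_nonneg _ _ (by positivity), ← Real.rpow_add hy,
    ← Real.rpow_add hy]
  rcases le_total y 1 with h | h
  · refine (min_le_left _ _).trans (le_min ?_ ?_) <;>
      exact Real.rpow_le_rpow_of_exponent_ge hy h (by linarith)
  · refine (min_le_right _ _).trans (le_min ?_ ?_) <;>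
      exact Real.rpow_le_rpow_of_exponent_le h (by linarith)

end RealInequalities

section Geometric

/-- The law on `ℕ` giving mass `2⁻⁽ⁿ⁺¹⁾` to `n`. Under it `2ⁿ` has the tail
`ℙ(2ⁿ ≥ x) ≈ 1 / x`, hence `2 ^ (n / r)` has the tail of an `r`-stable variable. -/
def geoHalf : Measure ℕ :=
  ProbabilityTheory.geometricMeasure ⟨1 / 2, by norm_num, by norm_num⟩

instance : IsProbabilityMeasure geoHalf :=
  ProbabilityTheory.isProbabilityMeasure_geometricMeasure

lemma geoHalf_real_singleton (n : ℕ) : geoHalf.real {n} = (1 / 2) ^ (n + 1) := by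
  rw [geoHalf, ProbabilityTheory.geometricMeasure_real_singleton]
  · norm_num [pow_succ]
  · simp [← Subtype.val_inj]

lemma geoHalf_real_Ici (m : ℕ) : geoHalf.real (Ici m) = (1 / 2) ^ m := by
  induction m with
  | zero => simp
  | succ m ih =>
    have hIci : Ici m = {m} ∪ Ici (m + 1) := by
      ext n
      grind
    rw [hIci, measureReal_union (by simp) measurableSet_Ici, geoHalf_real_singleton] at ih
    rw [← sub_eq_of_eq_add' ih.symm]
    ring

lemma le_geoHalf_real_of_le {α A : ℝ} (hα : 0 ≤ α) (h : α ≤ A) :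
    α / A / 2 ≤ geoHalf.real {n | A ≤ 2 ^ n * α} := by
  rcases hα.eq_or_lt with rfl | hα
  · simp
  obtain ⟨m, hm, hm'⟩ := exists_nat_pow_near ((one_le_div hα).2 h) one_lt_two
  calc α / A / 2 ≤ ((2 : ℝ) ^ m)⁻¹ / 2 := by
        gcongr
        rw [← inv_div]
        gcongr
    _ = geoHalf.real (Ici (m + 1)) := by
        rw [geoHalf_real_Ici, one_div, inv_pow, pow_succ, mul_inv, div_eq_mul_inv]
    _ ≤ geoHalf.real {n | A ≤ 2 ^ n * α} := by
        refine measureReal_mono fun n hn => ?_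
        calc A ≤ 2 ^ (m + 1) * α := ((div_lt_iff₀ hα).1 hm').le
          _ ≤ 2 ^ n * α := by
            gcongr
            exacts [one_le_two, hn]

lemma min_rpow_mul_geoHalf_le {r α β γ b : ℝ} (hr : 0 < r) (hγα : γ ≤ α - r) (hγβ : γ ≤ r - β)
    (hγ : 0 ≤ γ) (hb : b ≠ 0) (n : ℕ) :
    min (|b * 2 ^ (n / r : ℝ)| ^ α) (|b * 2 ^ (n / r : ℝ)| ^ β) * geoHalf.real {n}
      ≤ |b| ^ r * 2⁻¹ *
        min ((2 ^ (γ / r)) ^ n * |b| ^ γ) ((2 ^ (γ / r)) ^ n * |b| ^ γ)⁻¹ := by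
  set y : ℝ := |b * 2 ^ (n / r : ℝ)| with hy_def
  have hy : 0 < y := by positivity
  have hpow : ∀ u : ℝ, y ^ u = |b| ^ u * (2 ^ (u / r)) ^ n := fun u => by
    rw [hy_def, abs_mul, abs_of_pos (Real.rpow_pos_of_pos two_pos _),
      Real.mul_rpow (by positivity) (by positivity), ← Real.rpow_mul zero_le_two,
      ← Real.rpow_natCast, ← Real.rpow_mul zero_le_two]
    ring_nf
  calc min (y ^ α) (y ^ β) * geoHalf.real {n}
      ≤ y ^ r * min (y ^ γ) (y ^ γ)⁻¹ * (1 / 2) ^ (n + 1) := by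
        rw [geoHalf_real_singleton]
        gcongr
        exact min_rpow_le_rpow_mul_min hy hγα hγβ hγ
    _ = |b| ^ r * 2⁻¹ * min ((2 ^ (γ / r)) ^ n * |b| ^ γ) ((2 ^ (γ / r)) ^ n * |b| ^ γ)⁻¹ := by
        rw [hpow r, hpow γ, div_self hr.ne', Real.rpow_one, one_div, inv_pow, pow_succ,
          mul_comm (|b| ^ γ)]
        field_simp

lemma lintegral_geoHalf_min_le {r α β γ : ℝ} (hr : 0 < r) (hα : 0 < α) (hβ : 0 < β)
    (hγα : γ ≤ α - r) (hγβ : γ ≤ r - β) (hγ : 0 < γ) (b : ℝ) :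
    ∫⁻ n, min (‖b * 2 ^ (n / r : ℝ)‖ₑ ^ α) (‖b * 2 ^ (n / r : ℝ)‖ₑ ^ β) ∂geoHalf
      ≤ ENNReal.ofReal ((1 + 2 ^ (γ / r)) / (2 ^ (γ / r) - 1)) * ‖b‖ₑ ^ r := by
  rcases eq_or_ne b 0 with rfl | hb
  · simp [hα, hβ]
  set y : ℕ → ℝ := fun n => |b * 2 ^ (n / r : ℝ)|
  set ρ : ℝ := 2 ^ (γ / r)
  have hρ : 1 < ρ := Real.one_lt_rpow one_lt_two (by positivity)
  have hmin : ∀ n, 0 ≤ min (y n ^ α) (y n ^ β) := fun n => by positivity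
  simp only [lintegral_countable', ← ofReal_abs_rpow hα.le, ← ofReal_abs_rpow hβ.le,
    ← ofReal_abs_rpow hr.le, ← ENNReal.ofReal_min]
  refine ENNReal.tsum_le_of_sum_range_le fun N => ?_
  calc ∑ n ∈ Finset.range N, ENNReal.ofReal (min (y n ^ α) (y n ^ β)) * geoHalf {n}
      = ENNReal.ofReal (∑ n ∈ Finset.range N, min (y n ^ α) (y n ^ β) * geoHalf.real {n}) := by
        rw [ENNReal.ofReal_sum_of_nonneg fun n _ => mul_nonneg (hmin n) measureReal_nonneg]
        refine Finset.sum_congr rfl fun n _ => ?_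
        rw [ENNReal.ofReal_mul (hmin n), ofReal_measureReal]
    _ ≤ ENNReal.ofReal (|b| ^ r * 2⁻¹ * (2 * (1 + ρ) / (ρ - 1))) := by
        gcongr
        refine (Finset.sum_le_sum fun n _ =>
          min_rpow_mul_geoHalf_le hr hγα hγβ hγ.le hb n).trans ?_
        rw [← Finset.mul_sum]
        gcongr
        exact sum_range_min_pow_mul_inv_le hρ (by positivity) N
    _ = ENNReal.ofReal ((1 + ρ) / (ρ - 1)) * ENNReal.ofReal (|b| ^ r) := by
        have : 0 < ρ - 1 := sub_pos.2 hρ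
        rw [← ENNReal.ofReal_mul (by positivity)]
        ring_nf

end Geometric

section Stable

lemma one_sub_exp_neg_sum_le_pi_real {ι : Type*} [Fintype ι] {α : ι → Type*}
    [∀ i, MeasurableSpace (α i)] (μ : ∀ i, Measure (α i)) [∀ i, IsProbabilityMeasure (μ i)]
    {s : ∀ i, Set (α i)} (hs : ∀ i, MeasurableSet (s i)) :
    1 - Real.exp (-∑ i, (μ i).real (s i)) ≤ (Measure.pi μ).real {x | ∃ i, x i ∈ s i} := by
  have hcompl : {x : ∀ i, α i | ∃ i, x i ∈ s i} = (univ.pi fun i => (s i)ᶜ)ᶜ := by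
    ext x
    simp
  rw [hcompl, probReal_compl_eq_one_sub (.pi countable_univ fun i _ => (hs i).compl),
    ← Finset.sum_neg_distrib, Real.exp_sum, measureReal_def, Measure.pi_pi, ENNReal.toReal_prod]
  gcongr with i
  rw [← measureReal_def, probReal_compl_eq_one_sub (hs i)]
  exact Real.one_sub_le_exp_neg _

/-- A random vector `ξ` behaving like a vector of independent `r`-stable variables: its linear
combinations have `q`-th moments at most `C` times the `q`-th power of the `ℓ^r` norm of the
coefficients, and with probability at least `δ` the `r`-th power of the `ℓ^r` norm of a tuple of
linear combinations is at least half of that of the matrix of coefficients. -/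
structure IsRandomizer {Ω ι : Type*} [MeasurableSpace Ω] [Fintype ι] (P : Measure Ω) (r q : ℝ)
    (C δ : ℝ≥0∞) (ξ : Ω → ι → ℝ) : Prop where
  lintegral_le (b : ι → ℝ) :
    ∫⁻ ω, ‖∑ k, b k * ξ ω k‖ₑ ^ q ∂P ≤ C * (∑ k, ‖b k‖ₑ ^ r) ^ (q / r)
  le_measure_fin {n : ℕ} (a : Fin n → ι → ℝ) :
    δ ≤ P {ω | (2⁻¹ : ℝ≥0∞) * ∑ j, ∑ k, ‖a j k‖ₑ ^ r ≤ ∑ j, ‖∑ k, a j k * ξ ω k‖ₑ ^ r}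

lemma IsRandomizer.le_measure {Ω ι : Type*} [MeasurableSpace Ω] [Fintype ι] {P : Measure Ω}
    {r q : ℝ} {C δ : ℝ≥0∞} {ξ : Ω → ι → ℝ} (h : IsRandomizer P r q C δ ξ) {J : Type*}
    (s : Finset J) (a : J → ι → ℝ) :
    δ ≤ P {ω | (2⁻¹ : ℝ≥0∞) * ∑ j ∈ s, ∑ k, ‖a j k‖ₑ ^ r
      ≤ ∑ j ∈ s, ‖∑ k, a j k * ξ ω k‖ₑ ^ r} := by
  have hreindex : ∀ φ : J → ℝ≥0∞, ∑ j ∈ s, φ j = ∑ i, φ (s.equivFin.symm i) := fun φ => by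
    rw [← s.sum_coe_sort, s.equivFin.symm.sum_comp fun j => φ j]
  simpa only [hreindex] using h.le_measure_fin fun i => a (s.equivFin.symm i)

/-- Every finite length admits a randomizer with the given constants, on a countable discrete
probability space. -/
def HasRandomizers (r q : ℝ) (C δ : ℝ≥0∞) : Prop :=
  ∀ n : ℕ, ∃ (Ω : Type) (_ : MeasurableSpace Ω) (_ : Countable Ω) (_ : DiscreteMeasurableSpace Ω)
    (P : Measure Ω) (_ : IsProbabilityMeasure P) (ξ : Ω → Fin n → ℝ), IsRandomizer P r q C δ ξ

lemma hasRandomizers_two {q : ℝ} (hq : 0 < q) :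
    HasRandomizers 2 q (khintchineConst q) (4⁻¹ / khintchineConst 4) := fun n =>
  ⟨Fin n → ℤˣ, inferInstance, inferInstance, inferInstance, rademacher (Fin n), inferInstance,
    fun ε k => (ε k : ℤ), khintchine_upper hq, paley_zygmund_rademacher Finset.univ⟩

variable {ι : Type*} [Fintype ι]

/-- The joint law of independent geometric exponents and independent signs. -/
def geoSign (ι : Type*) [Fintype ι] : Measure ((ι → ℕ) × (ι → ℤˣ)) :=
  (Measure.pi fun _ => geoHalf).prod (rademacher ι)

instance : IsProbabilityMeasure (geoSign ι) :=
  inferInstanceAs (IsProbabilityMeasure ((Measure.pi fun _ => geoHalf).prod (rademacher ι)))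

/-- Symmetric discrete variables with the tails of `r`-stable ones: random signs times powers
of two with geometric exponents. -/
def stableVar (r : ℝ) (ω : (ι → ℕ) × (ι → ℤˣ)) (k : ι) : ℝ :=
  2 ^ (ω.1 k / r : ℝ) * (ω.2 k : ℤ)

lemma lintegral_pi_geoHalf_rpow_le_of_unit {r q γ : ℝ} (hr : 0 < r) (hq : 0 < q)
    (hγ2 : γ ≤ 2 - r) (hγq : γ ≤ r - q) (hγ : 0 < γ) {b : ι → ℝ} (hb : ∑ k, |b k| ^ r ≤ 1) :
    ∫⁻ n, (∑ k, ‖b k * 2 ^ (n k / r : ℝ)‖ₑ ^ (2 : ℝ)) ^ (q / 2) ∂(Measure.pi fun _ => geoHalf)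
      ≤ 1 + ENNReal.ofReal ((1 + 2 ^ (γ / r)) / (2 ^ (γ / r) - 1)) := by
  set c : ℝ≥0∞ := ENNReal.ofReal ((1 + 2 ^ (γ / r)) / (2 ^ (γ / r) - 1))
  set φ : ι → ℕ → ℝ≥0∞ := fun k n =>
    min (‖b k * 2 ^ (n / r : ℝ)‖ₑ ^ (2 : ℝ)) (‖b k * 2 ^ (n / r : ℝ)‖ₑ ^ q)
  have hb' : ∑ k, ‖b k‖ₑ ^ r ≤ 1 := by
    simp only [← ofReal_abs_rpow hr.le]
    rw [← ENNReal.ofReal_sum_of_nonneg fun k _ => by positivity]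
    exact ENNReal.ofReal_le_one.2 hb
  have hpow : ∀ n : ι → ℕ, (∑ k, ‖b k * 2 ^ (n k / r : ℝ)‖ₑ ^ (2 : ℝ)) ^ (q / 2)
      ≤ 1 + ∑ k, φ k (n k) := fun n => by
    refine (ENNReal.rpow_le_rpow le_add_self (by positivity)).trans
      ((one_add_sum_rpow_le Finset.univ (fun k => ‖b k * 2 ^ (n k / r : ℝ)‖ₑ ^ (2 : ℝ))
        (s := q / 2) (by positivity) (by linarith)).trans_eq ?_)
    simp only [← ENNReal.rpow_mul, mul_div_cancel₀ q (two_ne_zero (α := ℝ)), φ]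
  calc ∫⁻ n, (∑ k, ‖b k * 2 ^ (n k / r : ℝ)‖ₑ ^ (2 : ℝ)) ^ (q / 2)
        ∂(Measure.pi fun _ => geoHalf)
      ≤ ∫⁻ n, (1 + ∑ k, φ k (n k)) ∂(Measure.pi fun _ => geoHalf) := lintegral_mono hpow
    _ = 1 + ∑ k, ∫⁻ n, φ k n ∂geoHalf := by
        rw [lintegral_add_left measurable_const, lintegral_finsetSum _ fun k _ => .of_discrete,
          lintegral_one, measure_univ]
        congr! 2 with k
        exact (measurePreserving_eval (fun _ : ι => geoHalf) k).lintegral_comp .of_discrete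
    _ ≤ 1 + ∑ k, c * ‖b k‖ₑ ^ r := by
        gcongr with k
        exact lintegral_geoHalf_min_le hr two_pos hq hγ2 hγq hγ (b k)
    _ ≤ 1 + c := by
        rw [← Finset.mul_sum]
        gcongr
        exact mul_le_of_le_one_right' hb'

lemma lintegral_stableVar_le_of_unit {r q γ : ℝ} (hr : 0 < r) (hq : 0 < q) (hγ2 : γ ≤ 2 - r)
    (hγq : γ ≤ r - q) (hγ : 0 < γ) (b : ι → ℝ) (hb : ∑ k, |b k| ^ r ≤ 1) :
    ∫⁻ ω, ‖∑ k, b k * stableVar r ω k‖ₑ ^ q ∂geoSign ι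
      ≤ khintchineConst q *
        (1 + ENNReal.ofReal ((1 + 2 ^ (γ / r)) / (2 ^ (γ / r) - 1))) := by
  calc ∫⁻ ω, ‖∑ k, b k * stableVar r ω k‖ₑ ^ q ∂geoSign ι
      = ∫⁻ n, ∫⁻ ε, ‖∑ k, b k * 2 ^ (n k / r : ℝ) * (ε k : ℤ)‖ₑ ^ q ∂rademacher ι
          ∂(Measure.pi fun _ => geoHalf) := by
        rw [geoSign, lintegral_prod _ .of_discrete]
        simp only [stableVar, mul_assoc]
    _ ≤ ∫⁻ n, khintchineConst q * (∑ k, ‖b k * 2 ^ (n k / r : ℝ)‖ₑ ^ (2 : ℝ)) ^ (q / 2)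
          ∂(Measure.pi fun _ => geoHalf) :=
        lintegral_mono fun n => khintchine_upper hq _
    _ ≤ khintchineConst q *
          (1 + ENNReal.ofReal ((1 + 2 ^ (γ / r)) / (2 ^ (γ / r) - 1))) := by
        rw [lintegral_const_mul _ .of_discrete]
        gcongr
        exact lintegral_pi_geoHalf_rpow_le_of_unit hr hq hγ2 hγq hγ hb

lemma ofReal_one_sub_exp_le_pi_geoHalf {α : ι → ℝ≥0∞} (hα : ∀ k, α k ≠ ⊤)
    (hα0 : ∑ k, α k ≠ 0) : ENNReal.ofReal (1 - Real.exp (-(1 / 2))) ≤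
      Measure.pi (fun _ : ι => geoHalf) {n | ∃ k, ∑ l, α l ≤ 2 ^ n k * α k} := by
  lift α to ι → NNReal using hα
  beta_reduce at hα0 ⊢
  norm_cast at hα0
  have hset : {n : ι → ℕ | ∃ k, ∑ l, (α l : ℝ≥0∞) ≤ 2 ^ n k * α k}
      = {n | ∃ k, n k ∈ {i : ℕ | ∑ l, α l ≤ 2 ^ i * α k}} := by
    ext n
    exact exists_congr fun k => by norm_cast
  rw [hset, ← ofReal_measureReal]
  refine ENNReal.ofReal_le_ofReal (le_trans ?_
    (one_sub_exp_neg_sum_le_pi_real (fun _ : ι => geoHalf) fun k => .of_discrete))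
  gcongr
  calc (1 / 2 : ℝ) = ∑ k, (α k : ℝ) / ↑(∑ l, α l) / 2 := by
        rw [← Finset.sum_div, ← Finset.sum_div, ← NNReal.coe_sum, div_self (mod_cast hα0)]
    _ ≤ ∑ k, geoHalf.real {n | ∑ l, α l ≤ 2 ^ n * α k} := by
        gcongr with k
        have hle : α k ≤ ∑ l, α l := Finset.single_le_sum_of_canonicallyOrdered (Finset.mem_univ k)
        exact_mod_cast le_geoHalf_real_of_le (α k).2 (NNReal.coe_le_coe.2 hle)

lemma inv_two_le_rademacher_stableVar {r : ℝ} (hr : 0 < r) {J : Type*} (s : Finset J)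
    (a : J → ι → ℝ) {n : ι → ℕ} {k : ι} {B : ℝ≥0∞} (hB : B ≤ 2 ^ n k * ∑ j ∈ s, ‖a j k‖ₑ ^ r) :
    2⁻¹ ≤ rademacher ι
      {ε | (2⁻¹ : ℝ≥0∞) * B ≤ ∑ j ∈ s, ‖∑ l, a j l * stableVar r (n, ε) l‖ₑ ^ r} := by
  refine (inv_two_le_rademacher_of_coord hr s (fun j l => a j l * 2 ^ (n l / r : ℝ)) k).trans
    (measure_mono fun ε hε => ?_)
  have hpow : ‖(2 : ℝ) ^ (n k / r : ℝ)‖ₑ ^ r = 2 ^ n k := by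
    rw [← ofReal_abs_rpow hr.le, abs_of_pos (by positivity), ← Real.rpow_mul zero_le_two,
      div_mul_cancel₀ _ hr.ne', Real.rpow_natCast, ENNReal.ofReal_pow zero_le_two,
      ENNReal.ofReal_ofNat]
  have hcoord : ∑ j ∈ s, ‖a j k * 2 ^ (n k / r : ℝ)‖ₑ ^ r = 2 ^ n k * ∑ j ∈ s, ‖a j k‖ₑ ^ r := by
    simp only [enorm_mul, ENNReal.mul_rpow_of_nonneg _ _ hr.le, hpow, ← Finset.sum_mul, mul_comm]
  simp only [mem_ofPred_eq, hcoord, stableVar, mul_assoc] at hε ⊢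
  exact le_trans (by gcongr) hε

lemma ofReal_mul_inv_two_le_geoSign {r : ℝ} (hr : 0 < r) {J : Type*} (s : Finset J)
    (a : J → ι → ℝ) :
    ENNReal.ofReal (1 - Real.exp (-(1 / 2))) * 2⁻¹ ≤ geoSign ι
      {ω | (2⁻¹ : ℝ≥0∞) * ∑ j ∈ s, ∑ k, ‖a j k‖ₑ ^ r
        ≤ ∑ j ∈ s, ‖∑ k, a j k * stableVar r ω k‖ₑ ^ r} := by
  set E : Set ((ι → ℕ) × (ι → ℤˣ)) := {ω | (2⁻¹ : ℝ≥0∞) * ∑ j ∈ s, ∑ k, ‖a j k‖ₑ ^ r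
        ≤ ∑ j ∈ s, ‖∑ k, a j k * stableVar r ω k‖ₑ ^ r} with hE
  set α : ι → ℝ≥0∞ := fun k => ∑ j ∈ s, ‖a j k‖ₑ ^ r
  have hα : ∀ k, α k ≠ ⊤ := fun k => ENNReal.sum_ne_top.2 fun j _ => by finiteness
  have hsum : ∑ j ∈ s, ∑ k, ‖a j k‖ₑ ^ r = ∑ k, α k := Finset.sum_comm
  rcases eq_or_ne (∑ k, α k) 0 with hA | hA
  · simp only [hE, hsum, hA, mul_zero, zero_le, ofPred_true, measure_univ]
    exact mul_le_one' (ENNReal.ofReal_le_one.2 (by linarith [Real.exp_pos (-(1 / 2))])) (by simp)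
  set N : Set (ι → ℕ) := {n | ∃ k, ∑ l, α l ≤ 2 ^ n k * α k}
  have hsection : N ⊆ {n | 2⁻¹ ≤ rademacher ι (Prod.mk n ⁻¹' E)} := fun n ⟨k, hk⟩ =>
    inv_two_le_rademacher_stableVar hr s a (hsum.trans_le hk)
  calc ENNReal.ofReal (1 - Real.exp (-(1 / 2))) * 2⁻¹
      ≤ (Measure.pi fun _ => geoHalf) N * 2⁻¹ := by
        gcongr
        exact ofReal_one_sub_exp_le_pi_geoHalf hα hA
    _ ≤ ∫⁻ n, rademacher ι (Prod.mk n ⁻¹' E) ∂(Measure.pi fun _ => geoHalf) := by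
        rw [mul_comm]
        exact (mul_le_mul_right (measure_mono hsection) _).trans
          (mul_meas_ge_le_lintegral₀ .of_discrete _)
    _ = geoSign ι E := by rw [geoSign, Measure.prod_apply .of_discrete]

lemma exists_hasRandomizers {r q : ℝ} (hr : 0 < r) (hq : 0 < q) (h : q < r ∧ r < 2 ∨ r = 2) :
    ∃ C δ : ℝ≥0∞, C ≠ ⊤ ∧ δ ≠ 0 ∧ HasRandomizers r q C δ := by
  rcases h with ⟨hqr, hr2⟩ | rfl
  · obtain ⟨γ, hγ0, hγ⟩ := exists_between (lt_min (sub_pos.2 hr2) (sub_pos.2 hqr))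
    have hγ2 : γ ≤ 2 - r := hγ.le.trans (min_le_left _ _)
    have hγq : γ ≤ r - q := hγ.le.trans (min_le_right _ _)
    refine ⟨_, _, mul_ne_top khintchineConst_ne_top (add_ne_top.2 ⟨one_ne_top, ofReal_ne_top⟩),
      mul_ne_zero ?_ (by simp), fun n => ⟨(Fin n → ℕ) × (Fin n → ℤˣ), inferInstance,
        inferInstance, inferInstance, geoSign (Fin n), inferInstance, stableVar r,
        lintegral_enorm_sum_rpow_le_of_unit hq hr
          (lintegral_stableVar_le_of_unit hr hq hγ2 hγq hγ0),
        ofReal_mul_inv_two_le_geoSign hr Finset.univ⟩⟩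
    simp
  · exact ⟨_, _, khintchineConst_ne_top,
      ENNReal.div_ne_zero.2 ⟨by simp, khintchineConst_ne_top⟩, hasRandomizers_two hq⟩

end Stable

section LebesgueSpaces

variable {X : Type*} [MeasurableSpace X] {μ : Measure X} {q : ℝ}

lemma eLq_eq_lintegral_enorm (hq : 0 < q) (f : X → ℝ) :
    eLq μ f q = (∫⁻ x, ‖f x‖ₑ ^ q ∂μ) ^ (1 / q) := by
  simp only [eLq, ofReal_abs_rpow hq.le]

lemma memLq_iff_memLp (hq : 0 < q) {f : X → ℝ} :
    MemLq μ f q ↔ Measurable f ∧ MemLp f (ENNReal.ofReal q) μ := by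
  refine and_congr_right fun hf => ?_
  rw [MemLp, and_iff_right hf.aestronglyMeasurable,
    eLpNorm_eq_lintegral_rpow_enorm_toReal (by simpa using hq) ofReal_ne_top,
    toReal_ofReal hq.le, eLq_eq_lintegral_enorm hq]

lemma MemLq.sum_mul_const (hq : 0 < q) {ι : Type*} (t : Finset ι) {F : ι → X → ℝ}
    (hF : ∀ k, MemLq μ (F k) q) (c : ι → ℝ) : MemLq μ (fun x => ∑ k ∈ t, F k x * c k) q := by
  simp only [memLq_iff_memLp hq] at hF ⊢
  exact ⟨Finset.measurable_fun_sum _ fun k _ => (hF k).1.mul_const _,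
    memLp_finsetSum _ fun k _ => (hF k).2.mul_const _⟩

variable {Y : Type*} [MeasurableSpace Y] {ν : Measure Y}

/-- Linearity on `L^q(μ)`, up to `ν`-null sets, of an operator acting on functions. -/
structure IsAELinear (μ : Measure X) (ν : Measure Y) (q : ℝ) (T : (X → ℝ) → Y → ℝ) : Prop where
  map_add (g h : X → ℝ) : MemLq μ g q → MemLq μ h q →
    T (fun x => g x + h x) =ᵐ[ν] fun y => T g y + T h y
  map_const_mul (c : ℝ) (g : X → ℝ) : MemLq μ g q →
    T (fun x => c * g x) =ᵐ[ν] fun y => c * T g y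

lemma IsAELinear.map_sum_mul {T : (X → ℝ) → Y → ℝ} (hT : IsAELinear μ ν q T) (hq : 0 < q)
    {ι : Type*} (t : Finset ι) {F : ι → X → ℝ} (hF : ∀ k, MemLq μ (F k) q) (c : ι → ℝ) :
    T (fun x => ∑ k ∈ t, F k x * c k) =ᵐ[ν] fun y => ∑ k ∈ t, T (F k) y * c k := by
  classical
  induction t using Finset.induction_on with
  | empty =>
    have hzero : MemLq μ (fun _ => 0) q := by simpa using MemLq.sum_mul_const hq ∅ hF c
    simpa using hT.map_const_mul 0 _ hzero
  | insert k t hk ih =>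
    have hterm : MemLq μ (fun x => c k * F k x) q := by
      simpa [mul_comm] using MemLq.sum_mul_const hq {k} hF c
    simp only [Finset.sum_insert hk, mul_comm _ (c k)]
    filter_upwards [hT.map_add _ _ hterm (MemLq.sum_mul_const hq t hF c),
      hT.map_const_mul (c k) _ (hF k), ih] with y hadd hmul hsum
    rw [hadd, hmul, hsum]

end LebesgueSpaces

section OneVariable

/-- The pointwise `ℓ^r` norm `(∑ |g j|^r)^(1/r)` of a finite family of functions. -/
def lrFun {J X : Type*} (r : ℝ) (s : Finset J) (g : J → X → ℝ) (x : X) : ℝ≥0∞ :=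
  (∑ j ∈ s, ‖g j x‖ₑ ^ r) ^ (1 / r)

/-- The `L^q(μ)` quasinorm of the pointwise `ℓ^r` norm of a finite family of functions. -/
def eLqLr {J X : Type*} [MeasurableSpace X] (μ : Measure X) (q r : ℝ) (s : Finset J)
    (g : J → X → ℝ) : ℝ≥0∞ :=
  (∫⁻ x, (∑ j ∈ s, ‖g j x‖ₑ ^ r) ^ (q / r) ∂μ) ^ (1 / q)

section Randomized

variable {X Y Ω : Type*} [MeasurableSpace X] [MeasurableSpace Y] [MeasurableSpace Ω]
  {μ : Measure X} {ν : Measure Y} {P : Measure Ω} {p q r : ℝ} {C δ : ℝ≥0∞}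
  {ι : Type*} [Fintype ι] {ξ : Ω → ι → ℝ} [Countable Ω]

lemma IsRandomizer.ae_le_measure (hξ : IsRandomizer P r q C δ ξ) (hr : 0 < r) (hq : 0 < q)
    {J : Type*} {s : Finset J} {T : J → (X → ℝ) → Y → ℝ} (hT : ∀ j ∈ s, IsAELinear μ ν q (T j))
    {F : ι → X → ℝ} (hF : ∀ k, MemLq μ (F k) q) :
    ∀ᵐ y ∂ν, δ ≤ P {ω | lrFun r (s ×ˢ Finset.univ) (fun j => T j.1 (F j.2)) y
      ≤ ENNReal.ofReal (2 ^ (1 / r)) * lrFun r s (fun j => T j fun x => ∑ k, F k x * ξ ω k) y} := by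
  have hlin : ∀ᵐ y ∂ν, ∀ ω, ∀ j ∈ s,
      T j (fun x => ∑ k, F k x * ξ ω k) y = ∑ k, T j (F k) y * ξ ω k := by
    simp only [ae_all_iff, Finset.eventually_all]
    exact fun ω j hj => (hT j hj).map_sum_mul hq Finset.univ hF (ξ ω)
  filter_upwards [hlin] with y hy
  refine (hξ.le_measure s fun j k => T j (F k) y).trans (measure_mono fun ω hω => ?_)
  have hsum : ∑ j ∈ s, ‖T j (fun x => ∑ k, F k x * ξ ω k) y‖ₑ ^ r
      = ∑ j ∈ s, ‖∑ k, T j (F k) y * ξ ω k‖ₑ ^ r :=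
    Finset.sum_congr rfl fun j hj => by rw [hy ω j hj]
  rw [mem_ofPred_eq, ← ENNReal.div_eq_inv_mul, ENNReal.div_le_iff (by simp) (by simp)] at hω
  rw [mem_ofPred_eq, lrFun, lrFun, Finset.sum_product, hsum,
    ← ENNReal.ofReal_rpow_of_pos two_pos, ← ENNReal.mul_rpow_of_nonneg _ _ (by positivity),
    ENNReal.ofReal_ofNat, mul_comm]
  gcongr

variable [DiscreteMeasurableSpace Ω]

lemma IsRandomizer.lintegral_lintegral_le (hξ : IsRandomizer P r q C δ ξ) (hC : C ≠ ⊤)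
    {F : ι → X → ℝ} (hF : ∀ k, Measurable (F k)) :
    ∫⁻ ω, ∫⁻ x, ‖∑ k, F k x * ξ ω k‖ₑ ^ q ∂μ ∂P
      ≤ C * ∫⁻ x, (∑ k, ‖F k x‖ₑ ^ r) ^ (q / r) ∂μ := by
  rw [lintegral_lintegral_swap_of_countable fun ω => by fun_prop, ← lintegral_const_mul' _ _ hC]
  exact lintegral_mono fun x => hξ.lintegral_le fun k => F k x

lemma IsRandomizer.measure_compl_eLq_le (hξ : IsRandomizer P r q C δ ξ) (hC : C ≠ ⊤)
    (hq : 0 < q) (hδ : δ ≠ ⊤) {F : ι → X → ℝ} (hF : ∀ k, Measurable (F k)) :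
    P {ω | eLq μ (fun x => ∑ k, F k x * ξ ω k) q
      ≤ (2 * C / δ) ^ (1 / q) * eLqLr μ q r Finset.univ F}ᶜ ≤ δ / 2 := by
  have hmarkov := measure_mul_lt_le_inv .of_discrete
    (hξ.lintegral_lintegral_le (μ := μ) hC hF) (ρ := 2 / δ) (by simpa using hδ)
  rw [ENNReal.inv_div (by simp) (by simp)] at hmarkov
  refine (measure_mono fun ω hω => ?_).trans hmarkov
  rw [mem_compl_iff, mem_ofPred_eq, not_le, eLq_eq_lintegral_enorm hq, eLqLr,
    ← ENNReal.mul_rpow_of_nonneg _ _ (by positivity),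
    ENNReal.rpow_lt_rpow_iff (by positivity)] at hω
  rwa [mem_ofPred_eq, ← mul_assoc, ← ENNReal.mul_div_right_comm]

/-- The factor lost when one variable is linearised by a randomizer with constants `C`, `δ`. -/
def mzConst (p q r : ℝ) (C δ : ℝ≥0∞) : ℝ≥0∞ :=
  (2 / δ) ^ (1 / p) * ENNReal.ofReal (2 ^ (1 / r)) * (2 * C / δ) ^ (1 / q)

lemma IsRandomizer.wnormAbs_lrFun_le [IsProbabilityMeasure P] (hξ : IsRandomizer P r q C δ ξ)
    (hC : C ≠ ⊤) (hδ : δ ≠ 0) (hp : 0 < p) (hq : 0 < q) (hr : 0 < r) {J : Type*} {s : Finset J}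
    {T : J → (X → ℝ) → Y → ℝ} (hT : ∀ j ∈ s, IsAELinear μ ν q (T j)) {K : ℝ≥0∞}
    (hK : ∀ f, MemLq μ f q → wnormAbs ν (lrFun r s fun j => T j f) p ≤ K * eLq μ f q)
    {F : ι → X → ℝ} (hF : ∀ k, MemLq μ (F k) q) :
    wnormAbs ν (lrFun r (s ×ˢ Finset.univ) fun j => T j.1 (F j.2)) p
      ≤ mzConst p q r C δ * K * eLqLr μ q r Finset.univ F := by
  have hδ1 : δ ≤ 1 := by simpa using hξ.le_measure (∅ : Finset ℕ) 0
  have hδtop : δ ≠ ⊤ := ne_top_of_le_ne_top one_ne_top hδ1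
  calc wnormAbs ν (lrFun r (s ×ˢ Finset.univ) fun j => T j.1 (F j.2)) p
      ≤ (2 / δ) ^ (1 / p) * (ENNReal.ofReal (2 ^ (1 / r)) *
          (K * ((2 * C / δ) ^ (1 / q) * eLqLr μ q r Finset.univ F))) := by
        refine wnormAbs_le_of_le_measure hp hδ hδtop (hξ.ae_le_measure hr hq hT hF)
          ((measure_mono (compl_subset_compl.2 fun ω hω => ?_)).trans
            (hξ.measure_compl_eLq_le (μ := μ) hC hq hδtop fun k => (hF k).1))
        refine (wnormAbs_ofReal_mul_le (by positivity) _).trans ?_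
        gcongr
        refine (hK _ (MemLq.sum_mul_const hq Finset.univ hF (ξ ω))).trans ?_
        gcongr
        exact hω
    _ = mzConst p q r C δ * K * eLqLr μ q r Finset.univ F := by
        rw [mzConst]
        ring

end Randomized

lemma HasRandomizers.wnormAbs_lrFun_le {X Y : Type*} [MeasurableSpace X] [MeasurableSpace Y]
    {μ : Measure X} {ν : Measure Y} {p q r : ℝ} {C δ : ℝ≥0∞} (h : HasRandomizers r q C δ)
    (hC : C ≠ ⊤) (hδ : δ ≠ 0) (hp : 0 < p) (hq : 0 < q) (hr : 0 < r) {J ι : Type*} {s : Finset J}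
    {T : J → (X → ℝ) → Y → ℝ} (hT : ∀ j ∈ s, IsAELinear μ ν q (T j)) {K : ℝ≥0∞}
    (hK : ∀ f, MemLq μ f q → wnormAbs ν (lrFun r s fun j => T j f) p ≤ K * eLq μ f q)
    (t : Finset ι) {F : ι → X → ℝ} (hF : ∀ k, MemLq μ (F k) q) :
    wnormAbs ν (lrFun r (s ×ˢ t) fun j => T j.1 (F j.2)) p
      ≤ mzConst p q r C δ * K * eLqLr μ q r t F := by
  obtain ⟨Ω, _, _, _, P, _, ξ, hξ⟩ := h t.card
  have hreindex : ∀ φ : ι → ℝ≥0∞, ∑ k ∈ t, φ k = ∑ i, φ (t.equivFin.symm i) := fun φ => by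
    rw [← t.sum_coe_sort, t.equivFin.symm.sum_comp fun k => φ k]
  have hlr : lrFun r (s ×ˢ t) (fun j => T j.1 (F j.2))
      = lrFun r (s ×ˢ Finset.univ) fun j => T j.1 (F (t.equivFin.symm j.2)) := by
    ext y
    simp only [lrFun, Finset.sum_product, hreindex]
  have heLq : eLqLr μ q r t F = eLqLr μ q r Finset.univ fun i => F (t.equivFin.symm i) := by
    simp only [eLqLr, hreindex]
  simpa only [hlr, heLq] using
    hξ.wnormAbs_lrFun_le hC hδ hp hq hr hT hK fun i => hF (t.equivFin.symm i)

end OneVariable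

section Multilinear

lemma sum_piFinset_eq_sum_update {κ : Type*} [Fintype κ] [DecidableEq κ] {ι : κ → Type*}
    {M : Type*} [AddCommMonoid M] (t : ∀ i, Finset (ι i)) (a : κ) (k₀ : ι a)
    (φ : (∀ i, ι i) → M) :
    ∑ k ∈ Fintype.piFinset t, φ k = ∑ z ∈ Fintype.piFinset (Function.update t a {k₀}) ×ˢ t a,
      φ (Function.update z.1 a z.2) := by
  refine Finset.sum_nbij' (fun k => (Function.update k a k₀, k a))
    (fun z => Function.update z.1 a z.2) ?_ ?_ (by simp) ?_ (by simp)
  · intro k hk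
    rw [Fintype.mem_piFinset] at hk
    refine Finset.mem_product.2 ⟨Fintype.mem_piFinset.2 fun i => ?_, hk a⟩
    rcases eq_or_ne i a with rfl | hi
    · simp
    · simpa [hi] using hk i
  · rintro ⟨k, n⟩ hkn
    rw [Finset.mem_product, Fintype.mem_piFinset] at hkn
    refine Fintype.mem_piFinset.2 fun i => ?_
    rcases eq_or_ne i a with rfl | hi
    · simpa using hkn.2
    · simpa [hi] using hkn.1 i
  · rintro ⟨k, n⟩ hkn
    rw [Finset.mem_product, Fintype.mem_piFinset] at hkn
    have hka : k a = k₀ := by simpa using hkn.1 a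
    simp [← hka]

lemma iSup_lrFun_piFinset {κ Y : Type*} [Fintype κ] [DecidableEq κ] {ι : κ → Type*} {r : ℝ}
    (hr : 0 < r) (g : (∀ i, ι i) → Y → ℝ) (y : Y) :
    ⨆ t : ∀ i, Finset (ι i), lrFun r (Fintype.piFinset t) g y
      = (∑' k, ‖g k y‖ₑ ^ r) ^ (1 / r) := by
  classical
  rw [ENNReal.tsum_eq_iSup_sum' (fun t : ∀ i, Finset (ι i) => Fintype.piFinset t) fun u =>
    ⟨fun i => u.image fun k => k i, fun k hk => Fintype.mem_piFinset.2 fun i =>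
      Finset.mem_image_of_mem _ hk⟩]
  exact ((ENNReal.orderIsoRpow (1 / r) (by positivity)).map_iSup _).symm

lemma lrFun_mono {J Y : Type*} {r : ℝ} (hr : 0 < r) {s t : Finset J} (hst : s ⊆ t) (g : J → Y → ℝ) :
    lrFun r s g ≤ lrFun r t g := fun y => by
  unfold lrFun
  gcongr

lemma lrFun_singleton {J Y : Type*} {r : ℝ} (hr : 0 < r) (j : J) (g : J → Y → ℝ) :
    lrFun r {j} g = fun y => ‖g j y‖ₑ := by
  ext y
  rw [lrFun, Finset.sum_singleton, one_div, ENNReal.rpow_rpow_inv hr.ne']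

lemma eLqLr_singleton {J X : Type*} [MeasurableSpace X] {μ : Measure X} {q r : ℝ} (hq : 0 < q)
    (hr : 0 < r) (j : J) (g : J → X → ℝ) : eLqLr μ q r {j} g = eLq μ (g j) q := by
  simp only [eLqLr, Finset.sum_singleton, eLq_eq_lintegral_enorm hq, ← ENNReal.rpow_mul,
    mul_div_cancel₀ q hr.ne']

lemma eLqLr_le_tsum {J X : Type*} [MeasurableSpace X] {μ : Measure X} {q r : ℝ} (hq : 0 < q)
    (hr : 0 < r) (s : Finset J) (g : J → X → ℝ) :
    eLqLr μ q r s g ≤ (∫⁻ x, (∑' j, ‖g j x‖ₑ ^ r) ^ (q / r) ∂μ) ^ (1 / q) := by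
  unfold eLqLr
  gcongr
  exact ENNReal.sum_le_tsum s

variable {κ : Type*} [DecidableEq κ] {X : κ → Type*} [∀ i, MeasurableSpace (X i)]
  {Y : Type*} [MeasurableSpace Y] {μ : ∀ i, Measure (X i)} {ν : Measure Y} {p r : ℝ} {q : κ → ℝ}
  {S : (∀ i, X i → ℝ) → Y → ℝ} {K : ℝ≥0∞} {C δ : κ → ℝ≥0∞}

/-- Linearity in each variable on `∏ L^{q i}(μ i)`, up to `ν`-null sets. -/
structure IsAEMultilinear (μ : ∀ i, Measure (X i)) (ν : Measure Y) (q : κ → ℝ)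
    (S : (∀ i, X i → ℝ) → Y → ℝ) : Prop where
  map_update_add (i : κ) (f : ∀ j, X j → ℝ) (g h : X i → ℝ) :
    (∀ j, MemLq (μ j) (f j) (q j)) → MemLq (μ i) g (q i) → MemLq (μ i) h (q i) →
      S (Function.update f i fun x => g x + h x) =ᵐ[ν]
        fun y => S (Function.update f i g) y + S (Function.update f i h) y
  map_update_const_mul (i : κ) (f : ∀ j, X j → ℝ) (c : ℝ) (g : X i → ℝ) :
    (∀ j, MemLq (μ j) (f j) (q j)) → MemLq (μ i) g (q i) →
      S (Function.update f i fun x => c * g x) =ᵐ[ν] fun y => c * S (Function.update f i g) y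

lemma IsAEMultilinear.isAELinear (hS : IsAEMultilinear μ ν q S) {f : ∀ i, X i → ℝ}
    (hf : ∀ i, MemLq (μ i) (f i) (q i)) (i : κ) :
    IsAELinear (μ i) ν (q i) fun g => S (Function.update f i g) :=
  ⟨fun g h => hS.map_update_add i f g h hf, fun c g => hS.map_update_const_mul i f c g hf⟩

variable [Fintype κ]

lemma IsAEMultilinear.wnormAbs_lrFun_update_le (hS : IsAEMultilinear μ ν q S) (hp : 0 < p)
    (hq : ∀ i, 0 < q i) (hr : 0 < r) {a : κ} {C δ : ℝ≥0∞} (hrand : HasRandomizers r (q a) C δ)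
    (hC : C ≠ ⊤) (hδ : δ ≠ 0)
    {ι : κ → Type*} {t : ∀ i, Finset (ι i)} {F : ∀ i, ι i → X i → ℝ}
    (hF : ∀ i k, MemLq (μ i) (F i k) (q i)) {k₀ : ι a} {D : ℝ≥0∞}
    (hD : ∀ f, MemLq (μ a) f (q a) →
      wnormAbs ν (lrFun r (Fintype.piFinset (Function.update t a {k₀}))
        fun k => S fun i => Function.update F a (fun _ => f) i (k i)) p ≤ D * eLq (μ a) f (q a)) :
    wnormAbs ν (lrFun r (Fintype.piFinset t) fun k => S fun i => F i (k i)) p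
      ≤ mzConst p (q a) r C δ * D * eLqLr (μ a) (q a) r (t a) (F a) := by
  have happly (k : ∀ i, ι i) (f : X a → ℝ) : (fun i => Function.update F a (fun _ => f) i (k i))
      = Function.update (fun i => F i (k i)) a f :=
    funext fun _ => Function.apply_update (fun i φ => φ (k i)) F a _ _
  have hupdate (k : ∀ i, ι i) (n : ι a) : (fun i => F i (Function.update k a n i))
      = Function.update (fun i => F i (k i)) a (F a n) :=
    funext fun _ => Function.apply_update F k a n _
  have hbox : lrFun r (Fintype.piFinset t) (fun k => S fun i => F i (k i))
      = lrFun r (Fintype.piFinset (Function.update t a {k₀}) ×ˢ t a)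
          fun z => S (Function.update (fun i => F i (z.1 i)) a (F a z.2)) := by
    ext y
    simp only [lrFun, sum_piFinset_eq_sum_update t a k₀, hupdate]
  simp only [happly] at hD
  have hlinearise := hrand.wnormAbs_lrFun_le hC hδ hp (hq a) hr
    (s := Fintype.piFinset (Function.update t a {k₀}))
    (T := fun k g => S (Function.update (fun i => F i (k i)) a g))
    (fun k _ => hS.isAELinear (fun i => hF i (k i)) a) hD (t a) (F := F a) (hF a)
  rwa [← hbox] at hlinearise

-- Induction on the set `s` of variables that range over more than one function.
lemma IsAEMultilinear.wnormAbs_lrFun_le (hS : IsAEMultilinear μ ν q S) (hp : 0 < p)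
    (hq : ∀ i, 0 < q i) (hr : 0 < r)
    (hrand : ∀ i, HasRandomizers r (q i) (C i) (δ i)) (hC : ∀ i, C i ≠ ⊤) (hδ : ∀ i, δ i ≠ 0)
    (hK : ∀ f : ∀ i, X i → ℝ, (∀ i, MemLq (μ i) (f i) (q i)) →
      wnormAbs ν (fun y => ‖S f y‖ₑ) p ≤ K * ∏ i, eLq (μ i) (f i) (q i))
    {ι : κ → Type*} (s : Finset κ) (t : ∀ i, Finset (ι i)) (ht : ∀ i ∉ s, ∃ k, t i = {k})
    (F : ∀ i, ι i → X i → ℝ) (hF : ∀ i k, MemLq (μ i) (F i k) (q i)) :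
    wnormAbs ν (lrFun r (Fintype.piFinset t) fun k => S fun i => F i (k i)) p
      ≤ (∏ i ∈ s, mzConst p (q i) r (C i) (δ i)) * K * ∏ i, eLqLr (μ i) (q i) r (t i) (F i) := by
  induction s using Finset.induction_on generalizing t F with
  | empty =>
    choose k hk using fun i => ht i (Finset.notMem_empty i)
    obtain rfl : t = fun i => {k i} := funext hk
    simpa only [Fintype.piFinset_singleton, lrFun_singleton hr, eLqLr_singleton (hq _) hr,
      Finset.prod_empty, one_mul] using hK _ fun i => hF i (k i)
  | insert a s ha ih =>
    rcases (t a).eq_empty_or_nonempty with hta | ⟨k₀, -⟩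
    · have hbox : Fintype.piFinset t = ∅ := Finset.eq_empty_of_forall_notMem fun k hk => by
        simpa [hta] using Fintype.mem_piFinset.1 hk a
      simp [hbox, lrFun, wnormAbs, hr, hp]
    refine (hS.wnormAbs_lrFun_update_le hp hq hr (hrand a) (hC a) (hδ a) hF (k₀ := k₀)
      (D := (∏ i ∈ s, mzConst p (q i) r (C i) (δ i)) * K *
        ∏ i ∈ Finset.univ.erase a, eLqLr (μ i) (q i) r (t i) (F i)) fun f hf => ?_).trans_eq ?_
    · refine (ih _ (fun i hi => ?_) (Function.update F a fun _ => f) fun i k => ?_).trans_eq ?_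
      · rcases eq_or_ne i a with rfl | hia
        · exact ⟨k₀, by simp⟩
        · simpa [hia] using ht i (by simp [hia, hi])
      · rcases eq_or_ne i a with rfl | hia
        · simpa using hf
        · simpa [hia] using hF i k
      · rw [← Finset.mul_prod_erase _ _ (Finset.mem_univ a), Function.update_self,
          Function.update_self, eLqLr_singleton (hq a) hr, mul_comm (eLq _ _ _), ← mul_assoc]
        congr 2
        refine Finset.prod_congr rfl fun i hi => ?_
        rw [Function.update_of_ne (Finset.ne_of_mem_erase hi),
          Function.update_of_ne (Finset.ne_of_mem_erase hi)]
    · rw [Finset.prod_insert ha, ← Finset.mul_prod_erase _ _ (Finset.mem_univ a)]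
      ring

end Multilinear

lemma mzConst_ne_top {p q r : ℝ} {C δ : ℝ≥0∞} (hp : 0 < p) (hq : 0 < q) (hC : C ≠ ⊤)
    (hδ : δ ≠ 0) : mzConst p q r C δ ≠ ⊤ := by
  unfold mzConst
  finiteness

theorem MZ_multilinear_general {κ : Type*} [Fintype κ] [DecidableEq κ]
    (p r : ℝ) (q : κ → ℝ) (hp : 0 < p) (hq : ∀ i, 0 < q i) (hr0 : 0 < r)
    (hr : ((∀ i, q i < r) ∧ r < 2) ∨ r = 2) :
    ∃ C : ℝ≥0∞, 0 < C ∧ C < ⊤ ∧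
      ∀ (X : κ → Type*) [∀ i, MeasurableSpace (X i)] (Y : Type*) [MeasurableSpace Y]
        (ι : κ → Type*) [∀ i, Countable (ι i)] (μ : ∀ i, Measure (X i)) (ν : Measure Y)
        (S : (∀ i, X i → ℝ) → Y → ℝ) (K : ℝ≥0∞), IsAEMultilinear μ ν q S →
        (∀ f : ∀ i, X i → ℝ, (∀ i, MemLq (μ i) (f i) (q i)) →
          wnormAbs ν (fun y => ENNReal.ofReal |S f y|) p ≤ K * ∏ i, eLq (μ i) (f i) (q i)) →
        ∀ F : ∀ i, ι i → X i → ℝ, (∀ i k, MemLq (μ i) (F i k) (q i)) →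
          wnormAbs ν (fun y => (∑' k : ∀ i, ι i,
              ENNReal.ofReal (|S (fun i => F i (k i)) y| ^ r)) ^ (1 / r)) p
            ≤ C * K * ∏ i, (∫⁻ x, (∑' k, ENNReal.ofReal (|F i k x| ^ r)) ^ (q i / r) ∂(μ i))
              ^ (1 / q i) := by
  classical
  choose C δ hC hδ hrand using fun i =>
    exists_hasRandomizers hr0 (hq i) (hr.imp_left fun h => ⟨h.1 i, h.2⟩)
  refine ⟨∏ i, mzConst p (q i) r (C i) (δ i) + 1, by simp, ENNReal.add_lt_top.2
    ⟨ENNReal.prod_lt_top fun i _ => (mzConst_ne_top hp (hq i) (hC i) (hδ i)).lt_top,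
      one_lt_top⟩, fun X _ Y _ ι _ μ ν S K hS hK F hF => ?_⟩
  simp only [ofReal_abs_rpow hr0.le, ← Real.enorm_eq_ofReal_abs] at hK ⊢
  simp only [← iSup_lrFun_piFinset hr0 fun k => S fun i => F i (k i)]
  have hmono : Monotone fun t : ∀ i, Finset (ι i) =>
      lrFun r (Fintype.piFinset t) fun k => S fun i => F i (k i) := fun t u htu =>
    lrFun_mono hr0 (Fintype.piFinset_subset t u htu) _
  refine wnormAbs_iSup_le hmono.directed_le hp fun t => ?_
  refine (hS.wnormAbs_lrFun_le hp hq hr0 hrand hC hδ hK Finset.univ t (by simp) F hF).trans ?_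
  gcongr with i
  · exact le_self_add
  · exact eLqLr_le_tsum (hq i) hr0 (t i) (F i)

/-- **Marcinkiewicz–Zygmund inequality for multilinear operators
(Carando–Mazzitelli–Ombrosi).**  If `S` is `m`-linear and bounded from
`L^{q₁}(μ₁) × ⋯ × L^{q_m}(μ_m)` into `L^{p,∞}(ν)` with constant `K = ‖S‖_weak`, and
either `0 < p, qᵢ < r < 2` or `r = 2` (with `0 < p, qᵢ < ∞`), then there is a constant
`C`, depending only on `p, q₁, …, q_m, r, m`, such that for all countable families
`{f^i_k}_k ⊂ L^{qᵢ}(μᵢ)`,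
`‖(∑_{k⃗} |S(f¹_{k₁},…,f^m_{k_m})|^r)^{1/r}‖_{L^{p,∞}(ν)}
  ≤ C K ∏ᵢ ‖(∑_k |f^i_k|^r)^{1/r}‖_{L^{qᵢ}(μᵢ)}`. -/
theorem MZ_multilinear {m : ℕ} (hm : 0 < m)
    (X : Fin m → Type*) [∀ i, MeasurableSpace (X i)]
    (Y : Type*) [MeasurableSpace Y]
    (p r : ℝ) (q : Fin m → ℝ)
    (hp : 0 < p) (hq : ∀ i, 0 < q i) (hr0 : 0 < r)
    (hr : (p < r ∧ (∀ i, q i < r) ∧ r < 2) ∨ r = 2) :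
    ∃ C : ℝ≥0∞, 0 < C ∧ C < ⊤ ∧
      ∀ (μ : ∀ i, Measure (X i)) (ν : Measure Y),
        (∀ i, SigmaFinite (μ i)) → SigmaFinite ν →
        ∀ (S : ((i : Fin m) → (X i → ℝ)) → Y → ℝ) (K : ℝ≥0∞),
          -- additivity in each variable
          (∀ (i : Fin m) (f : (j : Fin m) → X j → ℝ) (g h : X i → ℝ),
              (∀ j, MemLq (μ j) (f j) (q j)) → MemLq (μ i) g (q i) → MemLq (μ i) h (q i) →
              S (Function.update f i (fun x => g x + h x)) =ᵐ[ν]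
                fun y => S (Function.update f i g) y + S (Function.update f i h) y) →
          -- homogeneity in each variable
          (∀ (i : Fin m) (f : (j : Fin m) → X j → ℝ) (c : ℝ) (g : X i → ℝ),
              (∀ j, MemLq (μ j) (f j) (q j)) → MemLq (μ i) g (q i) →
              S (Function.update f i (fun x => c * g x)) =ᵐ[ν]
                fun y => c * S (Function.update f i g) y) →
          -- weak-type boundedness with constant `K = ‖S‖_weak`
          (∀ f : (i : Fin m) → X i → ℝ, (∀ i, MemLq (μ i) (f i) (q i)) →
              wnormAbs ν (fun y => ENNReal.ofReal |S f y|) p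
                ≤ K * ∏ i, eLq (μ i) (f i) (q i)) →
          ∀ F : (i : Fin m) → ℕ → X i → ℝ,
            (∀ i k, MemLq (μ i) (F i k) (q i)) →
            wnormAbs ν (fun y => (∑' k : Fin m → ℕ,
                ENNReal.ofReal (|S (fun i => F i (k i)) y| ^ r)) ^ (1 / r)) p
              ≤ C * K * ∏ i,
                  (∫⁻ x, (∑' k : ℕ, ENNReal.ofReal (|F i k x| ^ r)) ^ (q i / r)
                    ∂(μ i)) ^ (1 / q i) := by
  obtain ⟨C, hC0, hCtop, hC⟩ := MZ_multilinear_general p r q hp hq hr0 (hr.imp_left And.right)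
  exact ⟨C, hC0, hCtop, fun μ ν _ _ S K hadd hmul hK F hF =>
    hC X Y (fun _ => ℕ) μ ν S K ⟨hadd, hmul⟩ hK F hF⟩

end
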